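/- arXiv:2412.08721 — 4 statements merged into one kernel-verified Lean document; each statement's English description precedes it below -/
import Mathlib

section
/- Let T > 0, let C ≥ 0, and let f : [0,T] → ℝ be differentiable with both f and its derivative f' Lipschitz continuous with constant C (i.e. |f(t₁)−f(t₂)| ≤ C|t₁−t₂| and |f'(t₁)−f'(t₂)| ≤ C|t₁−t₂| for all t₁,t₂ ∈ [0,T]). Then for every ε > 0 there exist a natural number K with K ≤ ε⁻¹·C·T·(1+T) and a quadratic spline f̃ : [0,T] → ℝ with K uniformly spaced interior knots such that for all t ∈ [0,T], |f(t) − f̃(t)| ≤ ε and |f'(t) − f̃'(t)| ≤ ε. -/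
/-!
The derivative is approximated first. With `K = ⌊ε⁻¹ C T (1 + T)⌋` and mesh `h = T / (K + 1)`, one
has `C h (1 + T) ≤ ε`. Let `s` be the continuous piecewise linear interpolant of `f'` at the points
`k h`. Since `f'` is `C`-Lipschitz and `s t` is a convex combination of the values of `f'` at the
two neighbouring knots, `|f' - s| ≤ C h ≤ ε`. The function `g t = f 0 + ∫₀ᵗ s` is then a quadratic
spline with derivative `s`, and the mean value inequality applied to `f - g`, which vanishes at `0`,
gives `|f - g| ≤ C h T ≤ ε`.

The interpolant is written as a sum of ramps, so that its continuity is immediate and its formula on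
each mesh interval is a telescoping sum (`interp_eq`).
-/

open Set

/-- A quadratic spline on `[0,T]` with `K` uniformly spaced interior knots: a
continuously differentiable function coinciding with a polynomial of degree at
most 2 on each subinterval `[kT/(K+1), (k+1)T/(K+1)]` for `k = 0,…,K`. -/
def IsQuadSpline (T : ℝ) (K : ℕ) (g : ℝ → ℝ) : Prop :=
  ContDiffOn ℝ 1 g (Icc 0 T) ∧
  ∀ k : ℕ, k ≤ K → ∃ p : Polynomial ℝ, p.degree ≤ 2 ∧
    ∀ t ∈ Icc ((k : ℝ) * T / (K + 1)) (((k : ℝ) + 1) * T / (K + 1)), g t = p.eval t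

/-- For `h > 0`, the continuous piecewise linear function with value `v k` at `k * h` for
`k = 0, …, K + 1`. It is a sum of ramps, the `j`-th one rising from `0` to `h` across
`[j h, (j + 1) h]` and scaled by
the slope of the interpolant there; it is constant outside `[0, (K + 1) h]`. -/
noncomputable def interp (h : ℝ) (K : ℕ) (v : ℕ → ℝ) (t : ℝ) : ℝ :=
  v 0 + ∑ j ∈ Finset.range (K + 1), (v (j + 1) - v j) / h * max 0 (min (t - j * h) h)

lemma interp_continuous (h : ℝ) (K : ℕ) (v : ℕ → ℝ) : Continuous (interp h K v) := by
  unfold interp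
  fun_prop

lemma interp_eq {h : ℝ} (hh : 0 < h) {K k : ℕ} (hk : k ≤ K) (v : ℕ → ℝ) {t : ℝ}
    (ht : t ∈ Icc ((k : ℝ) * h) ((k + 1) * h)) :
    interp h K v t = v k + (v (k + 1) - v k) / h * (t - k * h) := by
  obtain ⟨h1, h2⟩ := ht
  -- Ramps of index below `k` are saturated, those of index above `k` have not started.
  have below : ∀ j ∈ Finset.range k,
      (v (j + 1) - v j) / h * max 0 (min (t - j * h) h) = v (j + 1) - v j := by
    intro j hj
    have hjk : (j : ℝ) + 1 ≤ k := by exact_mod_cast Finset.mem_range.mp hj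
    have : h ≤ t - j * h := by nlinarith
    rw [min_eq_right this, max_eq_right hh.le]
    field_simp
  have above : ∀ j ∈ Finset.range (K + 1), j ∉ Finset.range (k + 1) →
      (v (j + 1) - v j) / h * max 0 (min (t - j * h) h) = 0 := by
    intro j _ hj
    have hjk : (k : ℝ) + 1 ≤ j := by
      have : k + 1 ≤ j := by simpa using hj
      exact_mod_cast this
    have : t - j * h ≤ 0 := by nlinarith
    rw [max_eq_left ((min_le_left _ _).trans this), mul_zero]
  unfold interp
  rw [← Finset.sum_subset (Finset.range_subset_range.mpr (by omega)) above,
    Finset.sum_range_succ, Finset.sum_congr rfl below, Finset.sum_range_sub,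
    min_eq_left (by linarith), max_eq_right (by linarith)]
  ring

lemma exists_mesh_interval {h : ℝ} (hh : 0 < h) (K : ℕ) {t : ℝ}
    (ht : t ∈ Icc 0 ((K + 1) * h)) :
    ∃ k : ℕ, k ≤ K ∧ t ∈ Icc ((k : ℝ) * h) ((k + 1) * h) := by
  obtain ⟨h0, h1⟩ := ht
  rcases le_total ((K : ℝ) * h) t with hK | hK
  · exact ⟨K, le_rfl, hK, h1⟩
  · refine ⟨⌊t / h⌋₊, ?_, ?_, ?_⟩
    · exact Nat.floor_le_of_le ((div_le_iff₀ hh).mpr hK)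
    · exact (le_div_iff₀ hh).mp (Nat.floor_le (by positivity))
    · exact ((div_lt_iff₀ hh).mp (Nat.lt_floor_add_one _)).le

/-- Linear interpolation of a `C`-Lipschitz function on a mesh of width `h` has error at most
`C * h`. -/
lemma interp_error {h C : ℝ} (hh : 0 < h) (hC : 0 ≤ C) (K : ℕ) (φ : ℝ → ℝ)
    (hφ : ∀ t₁ ∈ Icc (0:ℝ) ((K + 1) * h), ∀ t₂ ∈ Icc (0:ℝ) ((K + 1) * h),
      |φ t₁ - φ t₂| ≤ C * |t₁ - t₂|) {t : ℝ} (ht : t ∈ Icc 0 ((K + 1) * h)) :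
    |φ t - interp h K (fun k => φ (k * h)) t| ≤ C * h := by
  obtain ⟨k, hk, hkt⟩ := exists_mesh_interval hh K ht
  rw [interp_eq hh hk _ hkt]
  obtain ⟨h1, h2⟩ := hkt
  have hkK : (k : ℝ) ≤ K := by exact_mod_cast hk
  have hk0 : (0 : ℝ) ≤ k := k.cast_nonneg
  have ha : (k : ℝ) * h ∈ Icc (0:ℝ) ((K + 1) * h) := ⟨by positivity, by nlinarith⟩
  have hb : ((k : ℝ) + 1) * h ∈ Icc (0:ℝ) ((K + 1) * h) := ⟨by positivity, by nlinarith⟩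
  have ea : |φ t - φ (k * h)| ≤ C * h := (hφ t ht _ ha).trans <| by
    gcongr; rw [abs_le]; constructor <;> linarith
  have eb : |φ t - φ ((k + 1) * h)| ≤ C * h := (hφ t ht _ hb).trans <| by
    gcongr; rw [abs_le]; constructor <;> linarith
  -- The error is the convex combination, with weight `l`, of the errors at the two knots.
  obtain ⟨l, hl⟩ : ∃ l, l = (t - k * h) / h := ⟨_, rfl⟩
  have hl0 : 0 ≤ l := hl ▸ div_nonneg (by linarith) hh.le
  have hl1 : l ≤ 1 := hl ▸ (div_le_one hh).mpr (by linarith)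
  have key : φ t - (φ (k * h) + (φ (((k + 1 : ℕ) : ℝ) * h) - φ (k * h)) / h * (t - k * h))
      = (1 - l) * (φ t - φ (k * h)) + l * (φ t - φ ((k + 1) * h)) := by
    rw [hl]; push_cast; field_simp; ring
  rw [key]
  rw [abs_le] at ea eb ⊢
  constructor <;> nlinarith

/-- On each mesh interval a primitive of the interpolant is a polynomial of degree at most two. -/
lemma primitive_interp_poly {h : ℝ} (hh : 0 < h) {K k : ℕ} (hk : k ≤ K) (v : ℕ → ℝ) (c : ℝ) :
    ∃ p : Polynomial ℝ, p.degree ≤ 2 ∧ ∀ t ∈ Icc ((k : ℝ) * h) ((k + 1) * h),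
      c + ∫ x in (0:ℝ)..t, interp h K v x = p.eval t := by
  set a : ℝ := k * h with ha
  set m := (v (k + 1) - v k) / h with hm
  set c₀ := c + ∫ x in (0:ℝ)..a, interp h K v x with hc₀
  -- The Taylor form `c₀ + v k * (t - a) + m / 2 * (t - a) ^ 2`, expanded in powers of `t`.
  refine ⟨Polynomial.C (m / 2) * Polynomial.X ^ 2 + Polynomial.C (v k - m * a) * Polynomial.X
    + Polynomial.C (c₀ - v k * a + m / 2 * a ^ 2), Polynomial.degree_quadratic_le, ?_⟩
  intro t ht
  have hint : ∀ x y, IntervalIntegrable (interp h K v) MeasureTheory.volume x y :=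
    fun x y => (interp_continuous h K v).intervalIntegrable x y
  have hcongr : ∫ x in a..t, interp h K v x = ∫ x in a..t, (v k + m * (x - a)) := by
    refine intervalIntegral.integral_congr fun x hx => ?_
    rw [uIcc_of_le ht.1] at hx
    exact interp_eq hh hk v ⟨hx.1, hx.2.trans ht.2⟩
  have hquad : ∫ x in a..t, (v k + m * (x - a)) = v k * (t - a) + m / 2 * (t - a) ^ 2 := by
    have hd : ∀ x ∈ uIcc a t,
        HasDerivAt (fun x => v k * (x - a) + m / 2 * (x - a) ^ 2) (v k + m * (x - a)) x := by
      intro x _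
      have h1 : HasDerivAt (fun x : ℝ => x - a) 1 x := (hasDerivAt_id x).sub_const a
      refine ((h1.const_mul (v k)).add ((h1.pow 2).const_mul (m / 2))).congr_deriv ?_
      push_cast
      ring
    rw [intervalIntegral.integral_eq_sub_of_hasDerivAt hd
      (Continuous.intervalIntegrable (by fun_prop) _ _)]
    simp
  rw [← intervalIntegral.integral_add_adjacent_intervals (hint 0 a) (hint a t), hcongr, hquad]
  simp only [Polynomial.eval_add, Polynomial.eval_mul, Polynomial.eval_C, Polynomial.eval_X,
    Polynomial.eval_pow, hc₀]
  ring

theorem spline_approximation (T C : ℝ) (hT : 0 < T) (hC : 0 ≤ C)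
    (f f' : ℝ → ℝ)
    (hderiv : ∀ t ∈ Icc (0:ℝ) T, HasDerivWithinAt f (f' t) (Icc 0 T) t)
    (hfLip : ∀ t₁ ∈ Icc (0:ℝ) T, ∀ t₂ ∈ Icc (0:ℝ) T, |f t₁ - f t₂| ≤ C * |t₁ - t₂|)
    (hf'Lip : ∀ t₁ ∈ Icc (0:ℝ) T, ∀ t₂ ∈ Icc (0:ℝ) T, |f' t₁ - f' t₂| ≤ C * |t₁ - t₂|) :
    ∀ ε > 0, ∃ (K : ℕ) (g g' : ℝ → ℝ),
      (K : ℝ) ≤ ε⁻¹ * C * T * (1 + T) ∧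
      IsQuadSpline T K g ∧
      (∀ t ∈ Icc (0:ℝ) T, HasDerivWithinAt g (g' t) (Icc 0 T) t) ∧
      ∀ t ∈ Icc (0:ℝ) T, |f t - g t| ≤ ε ∧ |f' t - g' t| ≤ ε := by
  intro ε hε
  set B := ε⁻¹ * C * T * (1 + T) with hB
  have hB0 : 0 ≤ B := by positivity
  set K := ⌊B⌋₊ with hK
  set h := T / (K + 1) with hh_def
  have hK1 : (0 : ℝ) < K + 1 := by positivity
  have hh : 0 < h := by positivity
  have hTh : ((K : ℝ) + 1) * h = T := by rw [hh_def]; field_simp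
  have hmesh : C * h * (1 + T) ≤ ε := by
    have hBK : B ≤ K + 1 := (Nat.lt_floor_add_one B).le
    have hBε : C * T * (1 + T) = ε * B := by rw [hB]; field_simp
    have : C * h * (1 + T) = ε * B / (K + 1) := by rw [← hBε, hh_def]; ring
    rw [this, div_le_iff₀ hK1]
    gcongr
  set s := interp h K (fun k => f' (k * h)) with hs
  have hsc : Continuous s := interp_continuous _ _ _
  set g : ℝ → ℝ := fun t => f 0 + ∫ x in (0:ℝ)..t, s x with hg
  have hgd : ∀ t, HasDerivAt g (s t) t := fun t =>
    (intervalIntegral.integral_hasDerivAt_right (hsc.intervalIntegrable _ _)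
      hsc.stronglyMeasurable.stronglyMeasurableAtFilter hsc.continuousAt).const_add (f 0)
  have herr : ∀ t ∈ Icc (0:ℝ) T, |f' t - s t| ≤ C * h := by
    intro t ht
    rw [← hTh] at ht hf'Lip
    exact interp_error hh hC K f' hf'Lip ht
  have hCh : 0 ≤ C * h := by positivity
  refine ⟨K, g, s, Nat.floor_le hB0, ⟨?_, ?_⟩, fun t _ => (hgd t).hasDerivWithinAt, ?_⟩
  · refine ContDiff.contDiffOn (contDiff_one_iff_deriv.mpr
      ⟨fun t => (hgd t).differentiableAt, ?_⟩)
    rwa [show deriv g = s from funext fun t => (hgd t).deriv]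
  · intro k hk
    rw [mul_div_assoc, mul_div_assoc, ← hh_def]
    exact primitive_interp_poly hh hk _ _
  · intro t ht
    refine ⟨?_, (herr t ht).trans (by nlinarith)⟩
    have hmv := (convex_Icc (0:ℝ) T).norm_image_sub_le_of_norm_hasDerivWithin_le
      (f := fun t => f t - g t) (f' := fun t => f' t - s t)
      (fun x hx => (hderiv x hx).sub (hgd x).hasDerivWithinAt) herr
      (left_mem_Icc.mpr hT.le) ht
    have hg0 : g 0 = f 0 := by simp [hg]
    simp only [hg0, sub_self, sub_zero, Real.norm_eq_abs, abs_of_nonneg ht.1] at hmv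
    calc |f t - g t| ≤ C * h * t := hmv
      _ ≤ C * h * (1 + T) := by gcongr; linarith [ht.2]
      _ ≤ ε := hmesh
end

section
/- Fix T > 0, a dimension N, and finite families of N×N complex Hermitian matrices A₁,…,A_p and C₁,…,C_q, D₁,…,D_q. Let λ_a¹,…,λ_a^p : [0,T] → ℝ and λ_d¹,…,λ_d^q : [0,T] → ℝ be differentiable functions such that each function and its derivative is Lipschitz continuous, and define Λ(t) = Σᵢ λ_aⁱ(t)·Aᵢ + Σₖ ( λ_dᵏ(t)·Dₖ + (λ_dᵏ)'(t)·Cₖ ). Suppose Λ(t) is positive definite for every t ∈ [0,T]. Then for every δ > 0 there exist a natural number K and quadratic splines λ̃_a¹,…,λ̃_a^p, λ̃_d¹,…,λ̃_d^q on [0,T] with K uniformly spaced interior knots such that the matrix Λ̃(t) = Σᵢ λ̃_aⁱ(t)·Aᵢ + Σₖ ( λ̃_dᵏ(t)·Dₖ + (λ̃_dᵏ)'(t)·Cₖ ) is positive semidefinite for every t ∈ [0,T] and ‖Λ(t) − Λ̃(t)‖_F ≤ δ for every t ∈ [0,T]. -/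
/-! The idea is to interpolate derivatives rather than values. On the uniform knots, replace the
derivative `f'` of a coefficient function by its piecewise linear interpolant and integrate from
`0`, starting at `f 0`. The result is a quadratic spline; since `f'` is Lipschitz, the derivative
is off by at most a constant times the mesh size, and by the mean value inequality the function
itself is off by at most `T` times as much (`eventually_exists_quadSpline`). So values and
derivatives are approximated uniformly at once, on the same knots for all coefficients.

Next, `Λ(t)` depends linearly on the vector of coefficients `(λ_a(t), λ_d(t), λ_d'(t))`. The
vectors for which the resulting (automatically Hermitian) matrix is positive definite form an open
set (`isOpen_setOf_posDef`, by compactness of the unit sphere), and that set contains the compact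
curve `t ↦ (λ_a(t), λ_d(t), λ_d'(t))`, hence also a uniform thickening of it. A spline
approximation which is close enough therefore gives positive definite matrices, and continuity of
the Frobenius norm at `0` bounds the error. -/

open Set Matrix
open scoped ComplexOrder

/-- The Frobenius norm of a square complex matrix. -/
noncomputable def frobeniusNorm {N : ℕ} (Δ : Matrix (Fin N) (Fin N) ℂ) : ℝ :=
  Real.sqrt (∑ i, ∑ j, ‖Δ i j‖ ^ 2)

/-- The piecewise linear interpolant at the integers `0, …, n` of the values `g 0, …, g n`, written
in the basis of hat functions. -/
noncomputable def hatSum (g : ℕ → ℝ) (n : ℕ) (x : ℝ) : ℝ :=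
  ∑ j ∈ Finset.range (n + 1), g j * max 0 (1 - |x - j|)

lemma continuous_hatSum (g : ℕ → ℝ) (n : ℕ) : Continuous (hatSum g n) := by
  unfold hatSum
  fun_prop

lemma hatSum_eq (g : ℕ → ℝ) (n k : ℕ) (hk : k < n) (x : ℝ) (h1 : (k : ℝ) ≤ x) (h2 : x ≤ k + 1) :
    hatSum g n x = g k * (k + 1 - x) + g (k + 1) * (x - k) := by
  unfold hatSum
  have hsub : ({k, k + 1} : Finset ℕ) ⊆ Finset.range (n + 1) := by
    intro j hj
    simp only [Finset.mem_insert, Finset.mem_singleton] at hj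
    simp only [Finset.mem_range]
    omega
  rw [← Finset.sum_subset hsub, Finset.sum_pair (by omega)]
  · push_cast
    rw [abs_of_nonneg (by linarith), abs_of_nonpos (by linarith), max_eq_right (by linarith),
      max_eq_right (by linarith)]
    ring
  · intro j _ hj
    simp only [Finset.mem_insert, Finset.mem_singleton, not_or] at hj
    have hfar : 1 ≤ |x - j| := by
      rcases lt_or_ge j k with h | h
      · have : (j : ℝ) + 1 ≤ k := by exact_mod_cast h
        exact le_trans (by linarith) (le_abs_self _)
      · have : (k : ℝ) + 2 ≤ j := by
          have : k + 2 ≤ j := by omega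
          exact_mod_cast this
        exact le_trans (by linarith) (neg_le_abs _)
    rw [max_eq_left (by linarith), mul_zero]

/-- Integrating a piecewise linear function gives a quadratic spline. -/
lemma isQuadSpline_integral (T : ℝ) (hT : 0 < T) (K : ℕ) (g : ℕ → ℝ) (a : ℝ) :
    IsQuadSpline T K (fun t => a + ∫ u in (0:ℝ)..t, hatSum g (K + 1) (u * (K + 1) / T)) := by
  have hcont : Continuous (fun u : ℝ => hatSum g (K + 1) (u * (K + 1) / T)) :=
    (continuous_hatSum g (K + 1)).comp (by fun_prop)
  have hK : (0 : ℝ) < K + 1 := by positivity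
  refine ⟨?_, fun k hk => ?_⟩
  · apply ContDiff.contDiffOn
    apply contDiff_const.add
    rw [contDiff_one_iff_deriv]
    refine ⟨fun t => (hcont.integral_hasStrictDerivAt 0 t).hasDerivAt.differentiableAt, ?_⟩
    have : deriv (fun t => ∫ u in (0:ℝ)..t, hatSum g (K + 1) (u * (K + 1) / T)) =
        fun u : ℝ => hatSum g (K + 1) (u * (K + 1) / T) :=
      funext fun t => hcont.deriv_integral _ 0 t
    rw [this]
    exact hcont
  · -- On the `k`-th piece the integrand is `α + β * u`.
    set s : ℝ := (k : ℝ) * T / (K + 1) with hs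
    set α : ℝ := g k * (k + 1) - g (k + 1) * k with hα
    set β : ℝ := (g (k + 1) - g k) * ((K + 1) / T) with hβ
    set I : ℝ := ∫ u in (0:ℝ)..s, hatSum g (K + 1) (u * (K + 1) / T) with hI
    refine ⟨Polynomial.C (β / 2) * Polynomial.X ^ 2 + Polynomial.C α * Polynomial.X +
      Polynomial.C (a + I - α * s - β / 2 * s ^ 2), Polynomial.degree_quadratic_le, ?_⟩
    intro t ht
    have hpiece : ∫ u in s..t, hatSum g (K + 1) (u * (K + 1) / T) = ∫ u in s..t, (α + β * u) := by
      apply intervalIntegral.integral_congr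
      intro u hu
      rw [uIcc_of_le ht.1] at hu
      have h1 : (k : ℝ) ≤ u * (K + 1) / T := by
        rw [le_div_iff₀ hT]
        exact (div_le_iff₀ hK).mp hu.1
      have h2 : u * (K + 1) / T ≤ k + 1 := by
        rw [div_le_iff₀ hT]
        exact (le_div_iff₀ hK).mp (hu.2.trans ht.2)
      simp only
      rw [hatSum_eq g (K + 1) k (by omega) _ h1 h2, hα, hβ]
      field_simp
      ring
    have hadd := intervalIntegral.integral_add_adjacent_intervals
      (hcont.intervalIntegrable (μ := MeasureTheory.volume) 0 s)
      (hcont.intervalIntegrable (μ := MeasureTheory.volume) s t)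
    have hquad : ∫ u in s..t, (α + β * u) = α * (t - s) + β * ((t ^ 2 - s ^ 2) / 2) := by
      rw [intervalIntegral.integral_add (by simp) ((by fun_prop : Continuous
        fun u : ℝ => β * u).intervalIntegrable _ _), intervalIntegral.integral_const_mul,
        integral_id, intervalIntegral.integral_const, smul_eq_mul]
      ring
    simp only [Polynomial.eval_add, Polynomial.eval_mul, Polynomial.eval_C, Polynomial.eval_pow,
      Polynomial.eval_X]
    rw [← hadd, hpiece, hquad]
    ring

/-- The piecewise linear interpolant of a Lipschitz function is off by at most the Lipschitz
constant times the mesh size. -/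
lemma abs_hatSum_sub_le (T : ℝ) (hT : 0 < T) (K : ℕ) (f : ℝ → ℝ) (c : ℝ)
    (hf : ∀ t₁ ∈ Icc (0:ℝ) T, ∀ t₂ ∈ Icc (0:ℝ) T, |f t₁ - f t₂| ≤ c * |t₁ - t₂|)
    (t : ℝ) (ht : t ∈ Icc (0:ℝ) T) :
    |hatSum (fun j => f (j * T / (K + 1))) (K + 1) (t * (K + 1) / T) - f t|
      ≤ |c| * (T / (K + 1)) := by
  have hK : (0 : ℝ) < K + 1 := by positivity
  set x : ℝ := t * (K + 1) / T with hx
  have hxt : t = x * T / (K + 1) := by rw [hx]; field_simp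
  have hx0 : 0 ≤ x := div_nonneg (mul_nonneg ht.1 hK.le) hT.le
  have hxK : x ≤ K + 1 := by
    rw [hx, div_le_iff₀ hT]
    nlinarith [ht.2]
  -- The minimum with `K` matters only at the right endpoint `t = T`.
  obtain ⟨k, hkK, h1, h2⟩ : ∃ k : ℕ, k ≤ K ∧ (k : ℝ) ≤ x ∧ x ≤ k + 1 := by
    rcases le_total ⌊x⌋₊ K with h | h
    · exact ⟨⌊x⌋₊, h, Nat.floor_le hx0, (Nat.lt_floor_add_one x).le⟩
    · exact ⟨K, le_rfl, le_trans (by exact_mod_cast h) (Nat.floor_le hx0), hxK⟩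
  rw [hatSum_eq _ (K + 1) k (by omega) x h1 h2]
  have hnode : ∀ j : ℕ, j ≤ K + 1 → |x - j| ≤ 1 →
      |f (j * T / (K + 1)) - f t| ≤ |c| * (T / (K + 1)) := by
    intro j hj hxj
    have hjK : (j : ℝ) ≤ K + 1 := by exact_mod_cast hj
    have hmem : (j : ℝ) * T / (K + 1) ∈ Icc (0:ℝ) T := by
      refine ⟨by positivity, ?_⟩
      rw [div_le_iff₀ hK]
      nlinarith
    refine (hf _ hmem _ ht).trans ?_
    have hd : |(j : ℝ) * T / (K + 1) - t| ≤ T / (K + 1) := by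
      have : (j : ℝ) * T / (K + 1) - t = (j - x) * (T / (K + 1)) := by
        rw [hxt]; ring
      rw [this, abs_mul, abs_of_nonneg (by positivity : 0 ≤ T / ((K : ℝ) + 1)), abs_sub_comm]
      exact mul_le_of_le_one_left (by positivity) hxj
    exact mul_le_mul (le_abs_self c) hd (abs_nonneg _) (abs_nonneg _)
  have e1 := hnode k (by omega) (by rw [abs_le]; constructor <;> linarith)
  have e2 := hnode (k + 1) (by omega) (by push_cast; rw [abs_le]; constructor <;> linarith)
  rw [abs_le] at e1 e2 ⊢
  constructor <;> nlinarith [e1.1, e1.2, e2.1, e2.2]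

/-- On every sufficiently fine uniform grid there is a quadratic spline approximating `f` to first
order. Stating this for all large `K` lets finitely many functions share one grid. -/
lemma eventually_exists_quadSpline (T : ℝ) (hT : 0 < T) (f f' : ℝ → ℝ)
    (hderiv : ∀ t ∈ Icc (0:ℝ) T, HasDerivWithinAt f (f' t) (Icc 0 T) t)
    (hlip : ∃ c : ℝ, ∀ t₁ ∈ Icc (0:ℝ) T, ∀ t₂ ∈ Icc (0:ℝ) T, |f' t₁ - f' t₂| ≤ c * |t₁ - t₂|)
    (ε : ℝ) (hε : 0 < ε) :
    ∀ᶠ K : ℕ in Filter.atTop, ∃ s s' : ℝ → ℝ, IsQuadSpline T K s ∧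
      ∀ t ∈ Icc (0:ℝ) T, HasDerivWithinAt s (s' t) (Icc 0 T) t ∧
        |s t - f t| < ε ∧ |s' t - f' t| < ε := by
  obtain ⟨c, hc⟩ := hlip
  have hlim : Filter.Tendsto (fun K : ℕ => |c| * (T / ((K : ℝ) + 1))) Filter.atTop (nhds 0) := by
    have h := (tendsto_one_div_add_atTop_nhds_zero_nat (𝕜 := ℝ)).const_mul (|c| * T)
    rw [mul_zero] at h
    exact h.congr fun K => by ring
  have hlimT := hlim.mul_const T
  rw [zero_mul] at hlimT
  filter_upwards [hlim.eventually_lt_const hε, hlimT.eventually_lt_const hε] with K h1 h2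
  set s' : ℝ → ℝ := fun u => hatSum (fun j => f' (j * T / (K + 1))) (K + 1) (u * (K + 1) / T)
    with hs'
  have hcont : Continuous s' := (continuous_hatSum _ (K + 1)).comp (by fun_prop)
  have hs : ∀ t, HasDerivAt (fun t => f 0 + ∫ u in (0:ℝ)..t, s' u) (s' t) t := fun t =>
    (hcont.integral_hasStrictDerivAt 0 t).hasDerivAt.const_add _
  have hs'f : ∀ t ∈ Icc (0:ℝ) T, |s' t - f' t| ≤ |c| * (T / ((K : ℝ) + 1)) := fun t ht =>
    abs_hatSum_sub_le T hT K f' c hc t ht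
  refine ⟨_, s', isQuadSpline_integral T hT K _ (f 0), fun t ht =>
    ⟨(hs t).hasDerivWithinAt, ?_, (hs'f t ht).trans_lt h1⟩⟩
  have hmv := Convex.norm_image_sub_le_of_norm_hasDerivWithin_le
    (fun t ht => (hs t).hasDerivWithinAt.sub (hderiv t ht)) hs'f (convex_Icc 0 T)
    (left_mem_Icc.mpr hT.le) ht
  simp only [Pi.sub_apply, intervalIntegral.integral_same, add_zero, sub_self, sub_zero,
    Real.norm_eq_abs] at hmv
  refine (hmv.trans ?_).trans_lt h2
  rw [abs_of_nonneg ht.1]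
  exact mul_le_mul_of_nonneg_left ht.2 (by positivity)

/-- In a continuous family of Hermitian matrices, positive definiteness is an open condition:
positivity of the quadratic form need only be tested on the compact unit sphere. -/
lemma isOpen_setOf_posDef {X : Type*} [TopologicalSpace X] {N : ℕ}
    (Φ : X → Matrix (Fin N) (Fin N) ℂ) (hΦ : Continuous Φ) (hH : ∀ x, (Φ x).IsHermitian) :
    IsOpen {x | (Φ x).PosDef} := by
  -- A Hermitian form takes real values, so positivity concerns the real part only.
  have him : ∀ x v, (star v ⬝ᵥ (Φ x *ᵥ v)).im = 0 := fun x v =>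
    (hH x).im_star_dotProduct_mulVec_self v
  have hchar : ∀ x, (Φ x).PosDef ↔
      ∀ v ∈ Metric.sphere (0 : Fin N → ℂ) 1, 0 < (star v ⬝ᵥ (Φ x *ᵥ v)).re := by
    intro x
    constructor
    · intro h v hv
      have hv0 : v ≠ 0 := by
        rintro rfl
        simp at hv
      exact (Complex.lt_def.mp (h.dotProduct_mulVec_pos hv0)).1
    · intro h
      refine PosDef.of_dotProduct_mulVec_pos (hH x) fun v hv => ?_
      have hn : 0 < ‖v‖ := norm_pos_iff.mpr hv
      have hu := h (‖v‖⁻¹ • v) (by simp [norm_smul, hn.ne'])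
      have hscale : star (‖v‖⁻¹ • v) ⬝ᵥ (Φ x *ᵥ (‖v‖⁻¹ • v)) =
          (‖v‖⁻¹ * ‖v‖⁻¹) • (star v ⬝ᵥ (Φ x *ᵥ v)) := by
        rw [star_smul, mulVec_smul, smul_dotProduct, dotProduct_smul, smul_smul]
        simp
      rw [hscale, Complex.smul_re, smul_eq_mul] at hu
      rw [Complex.lt_def]
      exact ⟨pos_of_mul_pos_right hu (by positivity), (him x v).symm⟩
  simp only [hchar]
  rw [isOpen_iff_mem_nhds]
  intro x hx
  refine (isCompact_sphere (0 : Fin N → ℂ) 1).eventually_forall_of_forall_eventually fun v hv => ?_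
  have hq : Continuous fun z : X × (Fin N → ℂ) => (star z.2 ⬝ᵥ (Φ z.1 *ᵥ z.2)).re := by fun_prop
  exact hq.continuousAt.eventually (lt_mem_nhds (hx v hv))

theorem spline_approximation_of_strictly_feasible
    (T : ℝ) (hT : 0 < T) (N p q : ℕ)
    (A : Fin p → Matrix (Fin N) (Fin N) ℂ) (hA : ∀ i, (A i).IsHermitian)
    (C D : Fin q → Matrix (Fin N) (Fin N) ℂ)
    (hC : ∀ k, (C k).IsHermitian) (hD : ∀ k, (D k).IsHermitian)
    (lamA lamA' : Fin p → ℝ → ℝ) (lamD lamD' : Fin q → ℝ → ℝ)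
    (hA_deriv : ∀ i, ∀ t ∈ Icc (0:ℝ) T,
      HasDerivWithinAt (lamA i) (lamA' i t) (Icc 0 T) t)
    (hD_deriv : ∀ k, ∀ t ∈ Icc (0:ℝ) T,
      HasDerivWithinAt (lamD k) (lamD' k t) (Icc 0 T) t)
    (hA_lip : ∀ i, ∃ c : ℝ, ∀ t₁ ∈ Icc (0:ℝ) T, ∀ t₂ ∈ Icc (0:ℝ) T,
      |lamA i t₁ - lamA i t₂| ≤ c * |t₁ - t₂| ∧ |lamA' i t₁ - lamA' i t₂| ≤ c * |t₁ - t₂|)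
    (hD_lip : ∀ k, ∃ c : ℝ, ∀ t₁ ∈ Icc (0:ℝ) T, ∀ t₂ ∈ Icc (0:ℝ) T,
      |lamD k t₁ - lamD k t₂| ≤ c * |t₁ - t₂| ∧ |lamD' k t₁ - lamD' k t₂| ≤ c * |t₁ - t₂|)
    (hPos : ∀ t ∈ Icc (0:ℝ) T,
      (∑ i, lamA i t • A i + ∑ k, (lamD k t • D k + lamD' k t • C k)).PosDef) :
    ∀ δ > 0, ∃ (K : ℕ) (lamAt : Fin p → ℝ → ℝ) (lamDt lamDt' : Fin q → ℝ → ℝ),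
      (∀ i, IsQuadSpline T K (lamAt i)) ∧
      (∀ k, IsQuadSpline T K (lamDt k)) ∧
      (∀ k, ∀ t ∈ Icc (0:ℝ) T, HasDerivWithinAt (lamDt k) (lamDt' k t) (Icc 0 T) t) ∧
      ∀ t ∈ Icc (0:ℝ) T,
        (∑ i, lamAt i t • A i + ∑ k, (lamDt k t • D k + lamDt' k t • C k)).PosSemidef ∧
        frobeniusNorm
          ((∑ i, lamA i t • A i + ∑ k, (lamD k t • D k + lamD' k t • C k)) -
           (∑ i, lamAt i t • A i + ∑ k, (lamDt k t • D k + lamDt' k t • C k))) ≤ δ := by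
  intro δ hδ
  let Φ : (Fin p → ℝ) × (Fin q → ℝ) × (Fin q → ℝ) → Matrix (Fin N) (Fin N) ℂ := fun x =>
    ∑ i, x.1 i • A i + ∑ k, (x.2.1 k • D k + x.2.2 k • C k)
  have hΦ : Continuous Φ := by
    fun_prop
  have hsmul : ∀ (r : ℝ) {M : Matrix (Fin N) (Fin N) ℂ}, M.IsHermitian → (r • M).IsHermitian :=
    fun r M hM => IsSelfAdjoint.smul (IsSelfAdjoint.all r) hM
  have hH : ∀ x, (Φ x).IsHermitian := fun x =>
    (isSelfAdjoint_sum _ fun i _ => hsmul _ (hA i)).add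
      (isSelfAdjoint_sum _ fun k _ => (hsmul _ (hD k)).add (hsmul _ (hC k)))
  have hΦsub : ∀ x y, Φ x - Φ y = Φ (x - y) := by
    intro x y
    simp only [Φ, Prod.fst_sub, Prod.snd_sub, Pi.sub_apply, sub_smul, Finset.sum_add_distrib,
      Finset.sum_sub_distrib]
    abel
  let γ : ℝ → (Fin p → ℝ) × (Fin q → ℝ) × (Fin q → ℝ) := fun t =>
    (fun i => lamA i t, fun k => lamD k t, fun k => lamD' k t)
  have hγ : ContinuousOn γ (Icc 0 T) := by
    refine ContinuousOn.prodMk (continuousOn_pi.mpr fun i t ht =>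
      (hA_deriv i t ht).continuousWithinAt) (ContinuousOn.prodMk (continuousOn_pi.mpr fun k t ht =>
      (hD_deriv k t ht).continuousWithinAt) (continuousOn_pi.mpr fun k => ?_))
    obtain ⟨c, hc⟩ := hD_lip k
    refine (LipschitzOnWith.of_dist_le_mul (K := c.toNNReal) fun t₁ h₁ t₂ h₂ => ?_).continuousOn
    rw [Real.dist_eq, Real.dist_eq]
    exact (hc t₁ h₁ t₂ h₂).2.trans
      (mul_le_mul_of_nonneg_right (Real.le_coe_toNNReal c) (abs_nonneg _))
  obtain ⟨η₁, hη₁, hthick⟩ := (isCompact_Icc.image_of_continuousOn hγ).exists_thickening_subset_open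
    (isOpen_setOf_posDef Φ hΦ hH) (by
      rintro _ ⟨t, ht, rfl⟩
      exact hPos t ht)
  obtain ⟨η₂, hη₂, hfrob⟩ : ∃ η > 0, ∀ x, dist x 0 < η → frobeniusNorm (Φ x) < δ := by
    have hcont : Continuous fun x => frobeniusNorm (Φ x) := by
      unfold frobeniusNorm
      refine Real.continuous_sqrt.comp (continuous_finsetSum _ fun i _ =>
        continuous_finsetSum _ fun j _ => ?_)
      exact (((continuous_apply j).comp ((continuous_apply i).comp hΦ)).norm).pow 2
    have h0 : frobeniusNorm (Φ 0) < δ := by simpa [Φ, frobeniusNorm] using hδ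
    exact Metric.eventually_nhds_iff.mp (hcont.continuousAt.eventually (gt_mem_nhds h0))
  have hη : 0 < min η₁ η₂ := lt_min hη₁ hη₂
  obtain ⟨K, hKA, hKD⟩ := ((Filter.eventually_all.mpr fun i =>
    eventually_exists_quadSpline T hT (lamA i) (lamA' i) (hA_deriv i)
      ((hA_lip i).imp fun c hc t₁ h₁ t₂ h₂ => (hc t₁ h₁ t₂ h₂).2) _ hη).and
    (Filter.eventually_all.mpr fun k =>
    eventually_exists_quadSpline T hT (lamD k) (lamD' k) (hD_deriv k)
      ((hD_lip k).imp fun c hc t₁ h₁ t₂ h₂ => (hc t₁ h₁ t₂ h₂).2) _ hη)).exists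
  choose sA sA' hsA hsA_approx using hKA
  choose sD sD' hsD hsD_approx using hKD
  refine ⟨K, sA, sD, sD', hsA, hsD, fun k t ht => (hsD_approx k t ht).1, fun t ht => ?_⟩
  let y : (Fin p → ℝ) × (Fin q → ℝ) × (Fin q → ℝ) :=
    (fun i => sA i t, fun k => sD k t, fun k => sD' k t)
  have hdist : dist y (γ t) < min η₁ η₂ := by
    refine max_lt ((dist_pi_lt_iff hη).mpr fun i => ?_) (max_lt
      ((dist_pi_lt_iff hη).mpr fun k => ?_) ((dist_pi_lt_iff hη).mpr fun k => ?_))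
    · exact (hsA_approx i t ht).2.1
    · exact (hsD_approx k t ht).2.1
    · exact (hsD_approx k t ht).2.2
  constructor
  · have hpd : (Φ y).PosDef := hthick (Metric.mem_thickening_iff.mpr
      ⟨γ t, mem_image_of_mem γ ht, hdist.trans_le (min_le_left _ _)⟩)
    exact hpd.posSemidef
  · change frobeniusNorm (Φ (γ t) - Φ y) ≤ δ
    rw [hΦsub]
    refine (hfrob _ ?_).le
    rw [dist_zero_right, ← dist_eq_norm, dist_comm]
    exact hdist.trans_le (min_le_right _ _)
end

section
/- Fix T > 0, a dimension N, and N×N complex Hermitian matrices O, M₀, A₁,…,A_p, C₁,…,C_q, D₁,…,D_q. Let M : [0,T] → (N×N complex matrices) be differentiable and satisfy: M(0) = M₀; M(t) is Hermitian positive semidefinite for every t; Tr(Aᵢ·M(t)) = 0 for every t and every i; and Tr(Dₖ·M(t)) = Tr(Cₖ·M'(t)) for every t and every k (where M' denotes the derivative of M). Let λ_a¹,…,λ_a^p : [0,T] → ℝ be continuous and λ_d¹,…,λ_d^q : [0,T] → ℝ be continuously differentiable, and suppose: (i) Σₖ λ_dᵏ(T)·Cₖ = O, and (ii) the matrix Λ(t)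 = Σᵢ λ_aⁱ(t)·Aᵢ + Σₖ ( λ_dᵏ(t)·Dₖ + (λ_dᵏ)'(t)·Cₖ ) is positive semidefinite for every t ∈ [0,T]. Then Re Tr(O·M(T)) ≥ Σₖ λ_dᵏ(0)·Re Tr(Cₖ·M₀). -/
/-!
Consider the real function `g t = ∑ k, lamD k t * Re Tr (C k * M t)`. By the product rule and the
equation of motion its derivative is
`∑ k, (lamD' k t * Re Tr (C k * M t) + lamD k t * Re Tr (D k * M t))`, and since
`Tr (A i * M t) = 0` this equals `Re Tr (Λ t * M t)`, with `Λ` the dual multiplier matrix.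
The trace of a product of two positive semidefinite matrices is nonnegative
(`re_trace_mul_nonneg_of_posSemidef`), so `g` is monotone on `[0, T]`. The claim is `g 0 ≤ g T`,
once `g T` is rewritten with the boundary condition `∑ k, lamD k T • C k = O`.
-/

open Set Matrix
open scoped ComplexOrder

open scoped MatrixOrder in
lemma re_trace_mul_nonneg_of_posSemidef {N : ℕ} {X Y : Matrix (Fin N) (Fin N) ℂ}
    (hX : X.PosSemidef) (hY : Y.PosSemidef) : 0 ≤ ((X * Y).trace).re := by
  -- With `X = Bᴴ * B`, cyclicity of the trace gives `Tr (X * Y) = Tr (B * Y * Bᴴ)`.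
  obtain ⟨B, hB⟩ := CStarAlgebra.nonneg_iff_eq_star_mul_self.mp hX.nonneg
  rw [Matrix.star_eq_conjTranspose] at hB
  have h : (X * Y).trace = (B * Y * Bᴴ).trace := by
    rw [hB, Matrix.mul_assoc, Matrix.trace_mul_comm]
  rw [h]
  exact (Complex.nonneg_iff.mp (hY.mul_mul_conjTranspose_same B).trace_nonneg).1

lemma hasDerivWithinAt_re_trace_mul {N : ℕ} (B : Matrix (Fin N) (Fin N) ℂ)
    {M : ℝ → Matrix (Fin N) (Fin N) ℂ} {M' : Matrix (Fin N) (Fin N) ℂ} {s : Set ℝ} {t : ℝ}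
    (h : ∀ i j, HasDerivWithinAt (fun u => M u i j) (M' i j) s t) :
    HasDerivWithinAt (fun u => ((B * M u).trace).re) ((B * M').trace).re s t := by
  have h1 : HasDerivWithinAt (fun u => (B * M u).trace) (B * M').trace s t := by
    simp only [Matrix.trace, Matrix.diag_apply, Matrix.mul_apply]
    exact HasDerivWithinAt.fun_sum fun i _ => HasDerivWithinAt.fun_sum fun j _ =>
      (h j i).const_mul (B i j)
  exact Complex.reCLM.hasFDerivAt.comp_hasDerivWithinAt t h1

theorem weak_duality_time_evolution
    (T : ℝ) (hT : 0 < T) (N p q : ℕ)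
    (O M₀ : Matrix (Fin N) (Fin N) ℂ) (hO : O.IsHermitian) (hM₀ : M₀.IsHermitian)
    (A : Fin p → Matrix (Fin N) (Fin N) ℂ) (hA : ∀ i, (A i).IsHermitian)
    (C D : Fin q → Matrix (Fin N) (Fin N) ℂ)
    (hC : ∀ k, (C k).IsHermitian) (hD : ∀ k, (D k).IsHermitian)
    -- the primal trajectory M(t) and its derivative M'(t)
    (M M' : ℝ → Matrix (Fin N) (Fin N) ℂ)
    (hM_deriv : ∀ t ∈ Icc (0:ℝ) T, ∀ i j,
      HasDerivWithinAt (fun s => M s i j) (M' t i j) (Icc 0 T) t)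
    (hM_init : M 0 = M₀)
    (hM_psd : ∀ t ∈ Icc (0:ℝ) T, (M t).PosSemidef)
    (hM_alg : ∀ t ∈ Icc (0:ℝ) T, ∀ i, (A i * M t).trace = 0)
    (hM_eom : ∀ t ∈ Icc (0:ℝ) T, ∀ k, (D k * M t).trace = (C k * M' t).trace)
    -- the dual multiplier functions
    (lamA : Fin p → ℝ → ℝ) (lamD lamD' : Fin q → ℝ → ℝ)
    (hlamA_cont : ∀ i, ContinuousOn (lamA i) (Icc 0 T))
    (hlamD_deriv : ∀ k, ∀ t ∈ Icc (0:ℝ) T,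
      HasDerivWithinAt (lamD k) (lamD' k t) (Icc 0 T) t)
    (hlamD'_cont : ∀ k, ContinuousOn (lamD' k) (Icc 0 T))
    -- (i) boundary condition and (ii) dual feasibility
    (hboundary : ∑ k, lamD k T • C k = O)
    (hfeas : ∀ t ∈ Icc (0:ℝ) T,
      (∑ i, lamA i t • A i + ∑ k, (lamD k t • D k + lamD' k t • C k)).PosSemidef) :
    ((O * M T).trace).re ≥ ∑ k, lamD k 0 * ((C k * M₀).trace).re := by
  have hderiv : ∀ t ∈ Icc (0:ℝ) T, HasDerivWithinAt
      (fun s => ∑ k, lamD k s * ((C k * M s).trace).re)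
      (∑ k, (lamD' k t * ((C k * M t).trace).re + lamD k t * ((C k * M' t).trace).re))
      (Icc 0 T) t := fun t ht =>
    HasDerivWithinAt.fun_sum fun k _ =>
      (hlamD_deriv k t ht).mul (hasDerivWithinAt_re_trace_mul (C k) (hM_deriv t ht))
  have hnonneg : ∀ t ∈ Icc (0:ℝ) T,
      0 ≤ ∑ k, (lamD' k t * ((C k * M t).trace).re + lamD k t * ((C k * M' t).trace).re) := by
    intro t ht
    have h := re_trace_mul_nonneg_of_posSemidef (hfeas t ht) (hM_psd t ht)
    simpa [Matrix.add_mul, Finset.sum_mul, Matrix.trace_add, Matrix.trace_sum, Complex.re_sum,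
      hM_alg t ht, hM_eom t ht, add_comm] using h
  have hmono := monotoneOn_of_hasDerivWithinAt_nonneg (convex_Icc 0 T)
    (fun t ht => (hderiv t ht).continuousWithinAt)
    (fun t ht => (hderiv t (interior_subset ht)).mono interior_subset)
    (fun t ht => hnonneg t (interior_subset ht))
  have hle := hmono (left_mem_Icc.mpr hT.le) (right_mem_Icc.mpr hT.le) hT.le
  have hend : ((O * M T).trace).re = ∑ k, lamD k T * ((C k * M T).trace).re := by
    simp [← hboundary, Finset.sum_mul, Matrix.trace_sum, Complex.re_sum]
  rw [hend, ← hM_init]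
  exact hle
end

section
/- Let E > 0 be a real number. The set S = { a + 2E·b : a, b ∈ ℝ such that the real symmetric 3×3 matrix with rows (−a, 1/2, 0), (1/2, −b, 0), (0, 0, −b) is positive semidefinite } has greatest element −√(2E); that is, a + 2E·b ≤ −√(2E) for every such pair (a, b), and there exists a pair (a, b) satisfying the semidefinite constraint with a + 2E·b = −√(2E). -/
open Matrix

/-!
Write `s = √(2E)`. Weak duality: testing the constraint against the vector `(1, -s, 0)` gives
`-a - s - s² b ≥ 0`, which is the bound. It is attained at `a = -s/2`, `b = -1/(2s)`, where the
quadratic form of the matrix is the sum of squares `(s/2) (x + y/s)² + z²/(2s)`.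
-/

theorem dual_optimum_harmonic_oscillator (E : ℝ) (hE : 0 < E) :
    IsGreatest
      { r : ℝ | ∃ a b : ℝ,
          (!![-a, 1/2, 0; 1/2, -b, 0; 0, 0, -b] : Matrix (Fin 3) (Fin 3) ℝ).PosSemidef ∧
          r = a + 2 * E * b }
      (-Real.sqrt (2 * E)) := by
  have hs : 0 < Real.sqrt (2 * E) := Real.sqrt_pos.mpr (by linarith)
  have hsq : Real.sqrt (2 * E) ^ 2 = 2 * E := Real.sq_sqrt (by linarith)
  set s := Real.sqrt (2 * E)
  constructor
  · refine ⟨-(s / 2), -(1 / (2 * s)), ?_, ?_⟩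
    · refine Matrix.PosSemidef.of_dotProduct_mulVec_nonneg ?_ fun v => ?_
      · ext i j
        fin_cases i <;> fin_cases j <;> simp
      · have h : star v ⬝ᵥ (!![-(-(s / 2)), 1/2, 0; 1/2, -(-(1 / (2 * s))), 0;
            0, 0, -(-(1 / (2 * s)))] *ᵥ v)
            = s / 2 * (v 0 + v 1 / s) ^ 2 + v 2 ^ 2 / (2 * s) := by
          simp [Matrix.mulVec, dotProduct, Fin.sum_univ_three]
          field_simp
        rw [h]
        positivity
    · rw [← hsq]
      field_simp
      ring
  · rintro r ⟨a, b, hM, rfl⟩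
    have h := hM.dotProduct_mulVec_nonneg ![1, -s, 0]
    simp [Matrix.mulVec, dotProduct, Fin.sum_univ_three] at h
    rw [← hsq]
    nlinarith [h]
end
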